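/- Let ρ be a normalized state (positive semidefinite, trace 1) on ℂ^m ⊗ ℂ^n. Then the minimal eigenvalue of its partial transpose ρ^Γ is at least −1/2, and equality holds if and only if ρ is a two-qubit maximally entangled pure state, i.e., ρ = |ψ⟩⟨ψ| where |ψ⟩ = (|a₀b₀⟩ + |a₁b₁⟩)/√2 for orthonormal pairs a₀⊥a₁ in ℂ^m and b₀⊥b₁ in ℂ^n. -/

import Mathlib

open Matrix
open scoped ComplexOrder

/-- Partial transpose on the second tensor factor. -/
def ptranspose {m n : ℕ} (M : Matrix (Fin m × Fin n) (Fin m × Fin n) ℂ) :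
    Matrix (Fin m × Fin n) (Fin m × Fin n) ℂ :=
  Matrix.of fun p q => M (p.1, q.2) (q.1, p.2)

/-- A product vector in `ℂ^m ⊗ ℂ^n`. -/
def prodVec {m n : ℕ} (a : Fin m → ℂ) (b : Fin n → ℂ) : Fin m × Fin n → ℂ :=
  fun p => a p.1 * b p.2

lemma svd_aux {m n : ℕ} (V : Matrix (Fin m) (Fin n) ℂ) :
    ∃ (R : Matrix (Fin m) (Fin n) ℂ) (U : Matrix (Fin n) (Fin n) ℂ) (s : Fin n → ℝ),
      (∀ j, 0 ≤ s j) ∧ V = R * diagonal (fun j => (s j : ℂ)) * Uᴴ ∧ Uᴴ * U = 1 ∧ U * Uᴴ = 1 ∧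
      Rᴴ * R = diagonal (fun j => if s j = 0 then (0 : ℂ) else 1) ∧
      R * diagonal (fun j => if s j = 0 then (0 : ℂ) else 1) = R := by
  have hP : (Vᴴ * V).PosSemidef := posSemidef_conjTranspose_mul_self V
  have hH := hP.isHermitian
  set U : Matrix (Fin n) (Fin n) ℂ := (hH.eigenvectorUnitary : Matrix (Fin n) (Fin n) ℂ) with hU
  set d := hH.eigenvalues with hd
  have hd0 : ∀ j, 0 ≤ d j := hP.eigenvalues_nonneg
  have hU1 : Uᴴ * U = 1 := by
    have := Unitary.coe_star_mul_self hH.eigenvectorUnitary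
    simpa [star_eq_conjTranspose] using this
  have hU2 : U * Uᴴ = 1 := mul_eq_one_comm.mp hU1
  have hsp : Vᴴ * V = U * diagonal (fun j => (d j : ℂ)) * Uᴴ := by
    have := hH.spectral_theorem
    rw [Unitary.conjStarAlgAut_apply] at this
    exact this
  have hA : (V * U)ᴴ * (V * U) = diagonal (fun j => (d j : ℂ)) := by
    rw [conjTranspose_mul, Matrix.mul_assoc, ← Matrix.mul_assoc Vᴴ, hsp]
    calc Uᴴ * (U * diagonal (fun j => (d j : ℂ)) * Uᴴ * U)
        = (Uᴴ * U) * diagonal (fun j => (d j : ℂ)) * (Uᴴ * U) := by simp only [Matrix.mul_assoc]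
      _ = _ := by rw [hU1]; simp
  set s : Fin n → ℝ := fun j => Real.sqrt (d j) with hs
  have hss : ∀ j, s j * s j = d j := fun j => Real.mul_self_sqrt (hd0 j)
  have hcol : ∀ i j, s j = 0 → (V * U) i j = 0 := by
    intro i j hj
    have h1 := congrFun (congrFun hA j) j
    rw [diagonal_apply_eq, ← hss, hj, Matrix.mul_apply] at h1
    have h2 : (∑ x, Complex.normSq ((V * U) x j) : ℝ) = 0 := by
      have : ((∑ x, Complex.normSq ((V * U) x j) : ℝ) : ℂ) = 0 := by
        push_cast
        rw [mul_zero, Complex.ofReal_zero] at h1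
        rw [← h1]
        refine Finset.sum_congr rfl fun x _ => ?_
        rw [conjTranspose_apply, Complex.normSq_eq_conj_mul_self]; rfl
      exact_mod_cast this
    have h3 := (Finset.sum_eq_zero_iff_of_nonneg (fun x _ => Complex.normSq_nonneg _)).mp h2 i
      (Finset.mem_univ _)
    exact Complex.normSq_eq_zero.mp h3
  refine ⟨V * U * diagonal (fun j => ((s j)⁻¹ : ℂ)), U, s, fun j => Real.sqrt_nonneg _,
    ?_, hU1, hU2, ?_, ?_⟩
  · have : V * U * diagonal (fun j => ((s j)⁻¹ : ℂ)) * diagonal (fun j => (s j : ℂ)) = V * U := by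
      rw [Matrix.mul_assoc, diagonal_mul_diagonal]
      ext i j
      rw [mul_diagonal]
      by_cases h : s j = 0
      · rw [hcol i j h]; simp
      · have : (s j : ℂ) ≠ 0 := by exact_mod_cast h
        rw [inv_mul_cancel₀ this, mul_one]
    rw [this, Matrix.mul_assoc, hU2, Matrix.mul_one]
  · rw [conjTranspose_mul, Matrix.mul_assoc, ← Matrix.mul_assoc (V * U)ᴴ, hA,
      diagonal_conjTranspose, diagonal_mul_diagonal, diagonal_mul_diagonal]
    congr 1
    ext j
    by_cases h : s j = 0
    · simp [h]
    · have : (s j : ℂ) ≠ 0 := by exact_mod_cast h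
      rw [← hss]
      simp [h]
  · rw [Matrix.mul_assoc, diagonal_mul_diagonal]
    congr 2
    ext j
    by_cases h : s j = 0 <;> simp [h]

lemma frob {m n : ℕ} (V : Matrix (Fin m) (Fin n) ℂ) :
    (Vᴴ * V).trace = ((∑ i, ∑ j, Complex.normSq (V i j) : ℝ) : ℂ) := by
  rw [Finset.sum_comm]
  simp only [trace, diag_apply, mul_apply, conjTranspose_apply]
  push_cast
  refine Finset.sum_congr rfl fun x _ => Finset.sum_congr rfl fun y _ => ?_
  rw [Complex.normSq_eq_conj_mul_self]; rfl

/-- The quadratic form of the partial transpose of a pure state. -/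
noncomputable def QF {m n : ℕ} (V W : Matrix (Fin m) (Fin n) ℂ) : ℂ :=
  ((Vᴴ * W) * (Vᴴ * W)ᴴᵀ).trace

lemma QF_red {m n : ℕ} (R : Matrix (Fin m) (Fin n) ℂ) (U : Matrix (Fin n) (Fin n) ℂ)
    (s : Fin n → ℝ) (W : Matrix (Fin m) (Fin n) ℂ) (hU1 : Uᴴ * U = 1) :
    QF (R * diagonal (fun j => (s j : ℂ)) * Uᴴ) (W * Uᵀ) =
      ∑ j, ∑ l, (s j * s l : ℂ) * ((Rᴴ * W) j l * star ((Rᴴ * W) l j)) := by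
  have hU3 : Uᵀ * Uᴴᵀ = 1 := by rw [← transpose_mul, hU1, transpose_one]
  have hD : (diagonal (fun j => (s j : ℂ)))ᴴ = diagonal (fun j => (s j : ℂ)) := by
    rw [diagonal_conjTranspose]; congr 1; ext j; simp
  set D := diagonal (fun j => (s j : ℂ)) with hDd
  set T := Rᴴ * W with hT
  have h1 : (R * D * Uᴴ)ᴴ * (W * Uᵀ) = U * (D * T) * Uᵀ := by
    simp only [conjTranspose_mul, conjTranspose_conjTranspose, hD, hT, Matrix.mul_assoc]
  have h2 : (U * (D * T) * Uᵀ)ᴴᵀ = Uᴴᵀ * (D * T)ᴴᵀ * Uᴴ := by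
    simp only [conjTranspose_mul, transpose_mul, Matrix.mul_assoc]
    congr 2
  unfold QF
  rw [h1, h2]
  have h3 : U * (D * T) * Uᵀ * (Uᴴᵀ * (D * T)ᴴᵀ * Uᴴ) = U * ((D * T) * (D * T)ᴴᵀ * Uᴴ) := by
    calc _ = U * (D * T) * (Uᵀ * Uᴴᵀ) * (D * T)ᴴᵀ * Uᴴ := by simp only [Matrix.mul_assoc]
      _ = _ := by rw [hU3]; simp only [Matrix.mul_assoc, Matrix.mul_one]
  rw [h3, trace_mul_comm, Matrix.mul_assoc, hU1, Matrix.mul_one]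
  simp only [trace, diag_apply, mul_apply (M := D * T), transpose_apply, conjTranspose_apply]
  refine Finset.sum_congr rfl fun x _ => Finset.sum_congr rfl fun y _ => ?_
  simp only [hDd, diagonal_mul]
  simp
  ring

lemma bessel {m n : ℕ} (R W : Matrix (Fin m) (Fin n) ℂ) (P : Matrix (Fin n) (Fin n) ℂ)
    (h1 : Rᴴ * R = P) (h2 : R * P = R) (hP : Pᴴ = P) :
    ∑ i, ∑ j, Complex.normSq (W i j) = ∑ i, ∑ j, Complex.normSq ((Rᴴ * W) i j) +
      ∑ i, ∑ j, Complex.normSq ((W - R * (Rᴴ * W)) i j) := by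
  have h3 : P * Rᴴ = Rᴴ := by
    have := congrArg conjTranspose h2
    rwa [conjTranspose_mul, hP] at this
  have key : (Wᴴ * W).trace = ((Rᴴ * W)ᴴ * (Rᴴ * W)).trace +
      ((W - R * (Rᴴ * W))ᴴ * (W - R * (Rᴴ * W))).trace := by
    rw [← trace_add]
    congr 1
    have e1 : Rᴴ * (W - R * (Rᴴ * W)) = 0 := by
      rw [Matrix.mul_sub, ← Matrix.mul_assoc, ← Matrix.mul_assoc, h1, h3, sub_self]
    rw [conjTranspose_sub, Matrix.sub_mul, conjTranspose_mul R, Matrix.mul_assoc, e1,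
      Matrix.mul_zero, sub_zero, Matrix.mul_sub, conjTranspose_mul, conjTranspose_conjTranspose]
    simp only [Matrix.mul_assoc]
    abel
  rw [frob, frob, frob] at key
  exact_mod_cast key

lemma sc_nonneg (a b : ℂ) (c : ℝ) (h0 : 0 ≤ c) (h1 : c ≤ 1/2) :
    0 ≤ (1/4) * (Complex.normSq a + Complex.normSq b) + c * (a * star b).re := by
  simp only [Complex.normSq_apply, Complex.mul_re, Complex.star_def, Complex.conj_re,
    Complex.conj_im]
  nlinarith [mul_nonneg h0 (add_nonneg (sq_nonneg (a.re + b.re)) (sq_nonneg (a.im + b.im))),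
    mul_nonneg (sub_nonneg.2 h1) (add_nonneg (add_nonneg (sq_nonneg a.re) (sq_nonneg b.re))
      (add_nonneg (sq_nonneg a.im) (sq_nonneg b.im)))]

lemma sc_lt (a b : ℂ) (c : ℝ) (h0 : 0 ≤ c) (h1 : c < 1/2)
    (h : (1/4) * (Complex.normSq a + Complex.normSq b) + c * (a * star b).re = 0) : a = 0 := by
  have h2 : Complex.normSq a = 0 := by
    have hb := Complex.normSq_nonneg b
    have ha := Complex.normSq_nonneg a
    have : (1/2 - c) * (Complex.normSq a + Complex.normSq b) ≤ 0 := by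
      simp only [Complex.normSq_apply, Complex.mul_re, Complex.star_def, Complex.conj_re,
        Complex.conj_im] at h ⊢
      nlinarith [mul_nonneg h0 (add_nonneg (sq_nonneg (a.re + b.re)) (sq_nonneg (a.im + b.im)))]
    have h3 : Complex.normSq a + Complex.normSq b ≤ 0 := by
      by_contra hc
      push Not at hc
      have := mul_pos (sub_pos.2 h1) hc
      linarith
    linarith
  exact Complex.normSq_eq_zero.mp h2

lemma sc_eq (a b : ℂ)
    (h : (1/4) * (Complex.normSq a + Complex.normSq b) + (1/2) * (a * star b).re = 0) :
    b = -a := by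
  have h2 : Complex.normSq (b + a) = 0 := by
    simp only [Complex.normSq_apply, Complex.mul_re, Complex.star_def, Complex.conj_re,
        Complex.conj_im, Complex.add_re, Complex.add_im] at h ⊢
    linarith
  exact eq_neg_of_add_eq_zero_left (Complex.normSq_eq_zero.mp h2)

lemma sc_diag (a : ℂ) (c : ℝ) :
    (1/4) * (Complex.normSq a + Complex.normSq a) + c * (a * star a).re =
      (1/2 + c) * Complex.normSq a := by
  simp only [Complex.normSq_apply, Complex.mul_re, Complex.star_def, Complex.conj_re,
    Complex.conj_im]
  ring

lemma prod_le_half {n : ℕ} (s : Fin n → ℝ) (h1 : ∑ j, s j ^ 2 = 1)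
    (j l : Fin n) (hjl : j ≠ l) : s j ^ 2 + s l ^ 2 ≤ 1 := by
  rw [← h1, ← Finset.sum_pair hjl (f := fun j => s j ^ 2)]
  exact Finset.sum_le_sum_of_subset_of_nonneg (Finset.subset_univ _) (fun _ _ _ => sq_nonneg _)

/-- Nonnegative double-sum decomposition. -/
lemma G_eq {m n : ℕ} (R : Matrix (Fin m) (Fin n) ℂ) (U : Matrix (Fin n) (Fin n) ℂ)
    (s : Fin n → ℝ) (W : Matrix (Fin m) (Fin n) ℂ) (hU1 : Uᴴ * U = 1)
    (P : Matrix (Fin n) (Fin n) ℂ)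
    (h1 : Rᴴ * R = P) (h2 : R * P = R) (hP : Pᴴ = P) :
    (1/2) * ∑ i, ∑ j, Complex.normSq ((W * Uᵀ) i j) +
      (QF (R * diagonal (fun j => (s j : ℂ)) * Uᴴ) (W * Uᵀ)).re =
    (1/2) * ∑ i, ∑ j, Complex.normSq ((W - R * (Rᴴ * W)) i j) +
    ∑ j, ∑ l, ((1/4) * (Complex.normSq ((Rᴴ * W) j l) + Complex.normSq ((Rᴴ * W) l j)) +
      (s j * s l) * ((Rᴴ * W) j l * star ((Rᴴ * W) l j)).re) := by
  have hW : ∑ i, ∑ j, Complex.normSq ((W * Uᵀ) i j) = ∑ i, ∑ j, Complex.normSq (W i j) := by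
    have : ((W * Uᵀ)ᴴ * (W * Uᵀ)).trace = (Wᴴ * W).trace := by
      have hU3 : Uᵀ * Uᵀᴴ = 1 := by
        have : Uᵀᴴ = Uᴴᵀ := rfl
        rw [this, ← transpose_mul, hU1, transpose_one]
      rw [trace_mul_comm, conjTranspose_mul, Matrix.mul_assoc, ← Matrix.mul_assoc Uᵀ, hU3,
        Matrix.one_mul, trace_mul_comm]
    rw [frob, frob] at this
    exact_mod_cast this
  rw [hW, QF_red R U s W hU1, bessel R W P h1 h2 hP]
  simp only [Finset.sum_add_distrib, mul_add, ← Finset.mul_sum, Complex.re_sum]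
  rw [Finset.sum_comm (f := fun j l => Complex.normSq ((Rᴴ * W) l j))]
  have : ∀ j l, ((s j * s l : ℂ) * ((Rᴴ * W) j l * star ((Rᴴ * W) l j))).re =
      s j * s l * ((Rᴴ * W) j l * star ((Rᴴ * W) l j)).re := by
    intro j l
    rw [← Complex.ofReal_mul, Complex.re_ofReal_mul]
  simp only [this]
  ring

lemma sum_s {m n : ℕ} (R : Matrix (Fin m) (Fin n) ℂ) (U : Matrix (Fin n) (Fin n) ℂ)
    (s : Fin n → ℝ) (hU1 : Uᴴ * U = 1)
    (h1 : Rᴴ * R = diagonal (fun j => if s j = 0 then (0 : ℂ) else 1)) :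
    ∑ i, ∑ j, Complex.normSq ((R * diagonal (fun j => (s j : ℂ)) * Uᴴ) i j) = ∑ j, s j ^ 2 := by
  have hD : (diagonal (fun j => (s j : ℂ)))ᴴ = diagonal (fun j => (s j : ℂ)) := by
    rw [diagonal_conjTranspose]; congr 1; ext j; simp
  have : ((R * diagonal (fun j => (s j : ℂ)) * Uᴴ)ᴴ * (R * diagonal (fun j => (s j : ℂ)) * Uᴴ)).trace
      = ((∑ j, s j ^ 2 : ℝ) : ℂ) := by
    rw [trace_mul_comm, conjTranspose_mul, conjTranspose_conjTranspose, Matrix.mul_assoc,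
      ← Matrix.mul_assoc Uᴴ, hU1, Matrix.one_mul, trace_mul_comm, conjTranspose_mul, hD,
      Matrix.mul_assoc, ← Matrix.mul_assoc Rᴴ, h1, diagonal_mul_diagonal, diagonal_mul_diagonal,
      trace_diagonal]
    push_cast
    refine Finset.sum_congr rfl fun j _ => ?_
    by_cases h : s j = 0
    · simp [h]
    · simp [h, sq]
  rw [frob] at this
  exact_mod_cast this

lemma key {m n : ℕ} (V : Matrix (Fin m) (Fin n) ℂ)
    (hV : ∑ i, ∑ j, Complex.normSq (V i j) = 1) :
    (∀ W, 0 ≤ (1/2) * ∑ i, ∑ j, Complex.normSq (W i j) + (QF V W).re) ∧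
    ((∀ W, (1/2) * ∑ i, ∑ j, Complex.normSq (W i j) + (QF V W).re = 0 → W = 0) ∨
     ∃ (a₀ a₁ : Fin m → ℂ) (b₀ b₁ : Fin n → ℂ),
        star a₀ ⬝ᵥ a₀ = 1 ∧ star a₁ ⬝ᵥ a₁ = 1 ∧ star a₀ ⬝ᵥ a₁ = 0 ∧
        star b₀ ⬝ᵥ b₀ = 1 ∧ star b₁ ⬝ᵥ b₁ = 1 ∧ star b₀ ⬝ᵥ b₁ = 0 ∧
        ∀ W, (1/2) * ∑ i, ∑ j, Complex.normSq (W i j) + (QF V W).re = 0 →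
          ∃ t : ℂ, ∀ i j, W i j = t * (a₀ i * b₀ j + a₁ i * b₁ j)) := by
  obtain ⟨R, U, s, hs0, hVe, hU1, hU2, hR, hRP⟩ := svd_aux V
  have hP : (diagonal (fun j => if s j = 0 then (0 : ℂ) else 1))ᴴ =
      diagonal (fun j => if s j = 0 then (0 : ℂ) else 1) := by
    rw [diagonal_conjTranspose]; congr 1; ext j; simp only [Pi.star_apply]; split_ifs <;> simp
  have hs1 : ∑ j, s j ^ 2 = 1 := by
    rw [← sum_s R U s hU1 hR, ← hVe, hV]
  have hW : ∀ W : Matrix (Fin m) (Fin n) ℂ, ∃ W' : Matrix (Fin m) (Fin n) ℂ, W = W' * Uᵀ := by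
    intro W
    refine ⟨W * Uᴴᵀ, ?_⟩
    rw [Matrix.mul_assoc, ← transpose_mul, hU2, transpose_one, Matrix.mul_one]
  have hG := fun W => G_eq R U s W hU1 _ hR hRP hP
  rw [← hVe] at hG
  have hf : ∀ (T : Matrix (Fin n) (Fin n) ℂ) (j l), 0 ≤
      ((1/4) * (Complex.normSq (T j l) + Complex.normSq (T l j)) +
      (s j * s l) * (T j l * star (T l j)).re) := by
    intro T j l
    by_cases hjl : j = l
    · subst hjl
      rw [sc_diag]
      have := mul_nonneg (hs0 j) (hs0 j)
      have := Complex.normSq_nonneg (T j j)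
      positivity
    · apply sc_nonneg _ _ _ (mul_nonneg (hs0 j) (hs0 l))
      nlinarith [prod_le_half s hs1 j l hjl, sq_nonneg (s j - s l)]
  have hsq : ∀ W : Matrix (Fin m) (Fin n) ℂ, 0 ≤ ∑ i, ∑ j, Complex.normSq (W i j) := fun W =>
    Finset.sum_nonneg fun _ _ => Finset.sum_nonneg fun _ _ => Complex.normSq_nonneg _
  refine ⟨?_, ?_⟩
  · intro W
    obtain ⟨W', rfl⟩ := hW W
    rw [hG]
    have := hsq (W' - R * (Rᴴ * W'))
    have := Finset.sum_nonneg fun j (_ : j ∈ Finset.univ) =>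
      Finset.sum_nonneg fun l (_ : l ∈ Finset.univ) => hf (Rᴴ * W') j l
    linarith
  have hE : ∀ W' : Matrix (Fin m) (Fin n) ℂ, (1/2) * ∑ i, ∑ j, Complex.normSq ((W' * Uᵀ) i j) + (QF V (W' * Uᵀ)).re = 0 →
      W' = R * (Rᴴ * W') ∧ ∀ j l, ((1/4) * (Complex.normSq ((Rᴴ * W') j l) +
        Complex.normSq ((Rᴴ * W') l j)) +
        (s j * s l) * ((Rᴴ * W') j l * star ((Rᴴ * W') l j)).re) = 0 := by
    intro W' h
    rw [hG] at h
    have h1 := hsq (W' - R * (Rᴴ * W'))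
    have h2 := Finset.sum_nonneg fun j (_ : j ∈ Finset.univ) =>
      Finset.sum_nonneg fun l (_ : l ∈ Finset.univ) => hf (Rᴴ * W') j l
    have h3 : ∑ i, ∑ j, Complex.normSq ((W' - R * (Rᴴ * W')) i j) = 0 := by linarith
    have h4 := by
      rw [h3, mul_zero, zero_add] at h
      exact h
    constructor
    · ext i j
      have := (Finset.sum_eq_zero_iff_of_nonneg (fun i _ => Finset.sum_nonneg fun j _ =>
        Complex.normSq_nonneg _)).mp h3 i (Finset.mem_univ _)
      have := (Finset.sum_eq_zero_iff_of_nonneg (fun j _ =>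
        Complex.normSq_nonneg _)).mp this j (Finset.mem_univ _)
      exact sub_eq_zero.mp (Complex.normSq_eq_zero.mp this)
    · intro j l
      have := (Finset.sum_eq_zero_iff_of_nonneg (fun i _ => Finset.sum_nonneg fun j _ =>
        hf _ _ _)).mp h4 j (Finset.mem_univ _)
      exact (Finset.sum_eq_zero_iff_of_nonneg (fun j _ =>
        hf _ _ _)).mp this l (Finset.mem_univ _)
  have hdiag : ∀ T : Matrix (Fin n) (Fin n) ℂ, ∀ j, ((1/4) * (Complex.normSq (T j j) +
        Complex.normSq (T j j)) + (s j * s j) * (T j j * star (T j j)).re) = 0 → T j j = 0 := by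
    intro T j h
    rw [sc_diag] at h
    have : (1/2 + s j * s j) ≠ 0 := by nlinarith [mul_nonneg (hs0 j) (hs0 j)]
    exact Complex.normSq_eq_zero.mp ((mul_eq_zero.mp h).resolve_left this)
  by_cases hpq : ∃ p q, p ≠ q ∧ s p * s q = 1/2
  · right
    obtain ⟨p, q, hpq, hpq2⟩ := hpq
    have hle := prod_le_half s hs1 p q hpq
    have hp0 : s p ≠ 0 := by rintro h; rw [h] at hpq2; norm_num at hpq2
    have hq0 : s q ≠ 0 := by rintro h; rw [h] at hpq2; norm_num at hpq2
    have hother : ∀ j, j ≠ p → j ≠ q → s j = 0 := by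
      intro j hjp hjq
      have : s j ^ 2 + (s p ^ 2 + s q ^ 2) ≤ 1 := by
        rw [← hs1]
        have : s j ^ 2 + (s p ^ 2 + s q ^ 2) = ∑ x ∈ {j, p, q}, s x ^ 2 := by
          rw [Finset.sum_insert (by simp [hjp, hjq]), Finset.sum_pair hpq]
        rw [this]
        exact Finset.sum_le_sum_of_subset_of_nonneg (Finset.subset_univ _)
          (fun _ _ _ => sq_nonneg _)
      have : s j ^ 2 = 0 := by nlinarith [sq_nonneg (s p - s q), sq_nonneg (s j)]
      exact pow_eq_zero_iff (two_ne_zero) |>.mp this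
    have hRe : ∀ j l, ∑ i, star (R i j) * R i l = if j = l then
        (if s j = 0 then (0 : ℂ) else 1) else 0 := by
      intro j l
      have := congrFun (congrFun hR j) l
      rw [diagonal_apply, Matrix.mul_apply] at this
      exact this
    have hUe : ∀ j l, ∑ i, star (U i j) * U i l = if j = l then (1 : ℂ) else 0 := by
      intro j l
      have := congrFun (congrFun hU1 j) l
      rw [one_apply, Matrix.mul_apply] at this
      exact this
    refine ⟨fun i => R i p, fun i => - R i q, fun i => U i q, fun i => U i p, ?_, ?_, ?_, ?_, ?_,
      ?_, ?_⟩
    · refine (hRe p p).trans ?_; simp [hp0]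
    · simp only [dotProduct, Pi.star_apply, star_neg, neg_mul_neg]
      rw [hRe]; simp [hq0]
    · simp only [dotProduct, Pi.star_apply, mul_neg, Finset.sum_neg_distrib]
      rw [hRe]; simp [hpq]
    · refine (hUe q q).trans ?_; simp
    · refine (hUe p p).trans ?_; simp
    · refine (hUe q p).trans ?_; simp [hpq.symm]
    intro W hWz
    obtain ⟨W', rfl⟩ := hW W
    obtain ⟨e1, e2⟩ := hE W' hWz
    set T := Rᴴ * W' with hT
    have hT0 : ∀ j l, ¬ (j = p ∧ l = q) → ¬ (j = q ∧ l = p) → T j l = 0 := by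
      intro j l h1 h2
      by_cases hjl : j = l
      · subst hjl
        exact hdiag T j (e2 j j)
      · have hz : s j * s l = 0 := by
          by_cases hjp : j = p
          · rw [hother l (fun h => hjl (hjp.trans h.symm)) (fun h => h1 ⟨hjp, h⟩), mul_zero]
          · by_cases hjq : j = q
            · rw [hother l (fun h => h2 ⟨hjq, h⟩) (fun h => hjl (hjq.trans h.symm)), mul_zero]
            · rw [hother j hjp hjq, zero_mul]
        exact sc_lt _ (T l j) (s j * s l) hz.ge (by rw [hz]; norm_num) (e2 j l)
    have hTn : T q p = - T p q := by
      have := e2 p q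
      rw [hpq2] at this
      exact sc_eq _ _ this
    refine ⟨T p q, fun i j => ?_⟩
    have hW' : ∀ c, W' i c = (if c = q then R i p * T p q else 0) +
        (if c = p then R i q * T q p else 0) := by
      intro c
      rw [e1, Matrix.mul_apply]
      have : ∀ x, R i x * T x c = (if x = p then R i p * (if c = q then T p q else 0) else 0) +
          (if x = q then R i q * (if c = p then T q p else 0) else 0) := by
        intro x
        by_cases h1 : x = p ∧ c = q
        · obtain ⟨rfl, rfl⟩ := h1
          simp [hpq]
        · by_cases h2 : x = q ∧ c = p
          · obtain ⟨rfl, rfl⟩ := h2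
            simp [hpq.symm]
          · rw [hT0 x c h1 h2]
            grind
      simp only [this, Finset.sum_add_distrib, Finset.sum_ite_eq', Finset.mem_univ, if_true,
        mul_ite, mul_zero]
    rw [Matrix.mul_apply]
    simp only [hW', add_mul, ite_mul, zero_mul, Finset.sum_add_distrib, Finset.sum_ite_eq',
      Finset.mem_univ, if_true, transpose_apply, hTn]
    ring
  · left
    push Not at hpq
    intro W hWz
    obtain ⟨W', rfl⟩ := hW W
    obtain ⟨e1, e2⟩ := hE W' hWz
    have : Rᴴ * W' = 0 := by
      ext j l
      by_cases hjl : j = l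
      · subst hjl
        exact hdiag (Rᴴ * W') j (e2 j j)
      · refine sc_lt _ _ _ (mul_nonneg (hs0 j) (hs0 l)) (lt_of_le_of_ne ?_ (hpq j l hjl)) (e2 j l)
        nlinarith [prod_le_half s hs1 j l hjl, sq_nonneg (s j - s l)]
    rw [e1, this]; simp

lemma quad_pure {m n : ℕ} (v w : Fin m × Fin n → ℂ) :
    star v ⬝ᵥ (ptranspose (vecMulVec w (star w)) *ᵥ v) =
      QF (Matrix.of fun i j => v (i, j)) (Matrix.of fun i j => w (i, j)) := by
  have hR : QF (Matrix.of fun i j => v (i, j)) (Matrix.of fun i j => w (i, j)) =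
      ∑ j, ∑ l, ∑ i, ∑ i', (star (v (i, j)) * w (i, l)) * (v (i', l) * star (w (i', j))) := by
    unfold QF
    simp only [trace, diag_apply]
    refine Finset.sum_congr rfl fun j _ => ?_
    rw [mul_apply]
    refine Finset.sum_congr rfl fun l _ => ?_
    rw [transpose_apply, conjTranspose_apply, mul_apply, mul_apply, star_sum, Finset.sum_mul_sum]
    simp only [conjTranspose_apply, of_apply, star_mul', star_star]
  rw [hR]
  simp only [dotProduct, mulVec, ptranspose, of_apply, vecMulVec_apply, Pi.star_apply,
    Fintype.sum_prod_type, Finset.mul_sum]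
  rw [Finset.sum_comm]
  refine Finset.sum_congr rfl fun j _ => ?_
  have : ∀ i, ∑ i', ∑ l, star (v (i, j)) * (w (i, l) * star (w (i', j)) * v (i', l)) =
      ∑ l, ∑ i', star (v (i, j)) * w (i, l) * (v (i', l) * star (w (i', j))) := by
    intro i
    rw [Finset.sum_comm]
    refine Finset.sum_congr rfl fun l _ => Finset.sum_congr rfl fun i' _ => ?_
    ring
  simp only [this]
  rw [Finset.sum_comm]

lemma ptranspose_sum {m n N : ℕ} (M : Fin N → Matrix (Fin m × Fin n) (Fin m × Fin n) ℂ) :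
    ptranspose (∑ k, M k) = ∑ k, ptranspose (M k) := by
  ext p q
  simp [ptranspose, Matrix.sum_apply]

lemma trace_pure {m n : ℕ} (w : Fin m × Fin n → ℂ) :
    (vecMulVec w (star w)).trace = ((∑ i, ∑ j, Complex.normSq (w (i, j)) : ℝ) : ℂ) := by
  simp only [trace, diag_apply, vecMulVec_apply, Fintype.sum_prod_type, Pi.star_apply]
  push_cast
  refine Finset.sum_congr rfl fun i _ => Finset.sum_congr rfl fun j _ => ?_
  rw [Complex.star_def, Complex.mul_conj]

lemma exists_unit {m n : ℕ} (M : Matrix (Fin m × Fin n) (Fin m × Fin n) ℂ) (c : ℂ)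
    (h : ∃ v : Fin m × Fin n → ℂ, v ≠ 0 ∧ M *ᵥ v = c • v) :
    ∃ v : Fin m × Fin n → ℂ, (∑ i, ∑ j, Complex.normSq (v (i, j)) = 1) ∧
      star v ⬝ᵥ (M *ᵥ v) = c := by
  obtain ⟨v, hv, he⟩ := h
  set N := ∑ i, ∑ j, Complex.normSq (v (i, j)) with hN
  have hN0 : 0 ≤ N := Finset.sum_nonneg fun _ _ => Finset.sum_nonneg fun _ _ =>
    Complex.normSq_nonneg _
  have hN1 : N ≠ 0 := by
    intro h0
    apply hv
    ext ⟨i, j⟩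
    have := (Finset.sum_eq_zero_iff_of_nonneg (fun i _ => Finset.sum_nonneg fun j _ =>
        Complex.normSq_nonneg _)).mp h0 i (Finset.mem_univ _)
    have := (Finset.sum_eq_zero_iff_of_nonneg (fun j _ =>
        Complex.normSq_nonneg _)).mp this j (Finset.mem_univ _)
    exact Complex.normSq_eq_zero.mp this
  have hr : (Real.sqrt N)⁻¹ * (Real.sqrt N)⁻¹ = N⁻¹ := by
    rw [← mul_inv, Real.mul_self_sqrt hN0]
  have hu : ∑ i, ∑ j, Complex.normSq (((((Real.sqrt N)⁻¹ : ℝ) : ℂ) • v) (i, j)) = 1 := by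
    simp only [Pi.smul_apply, smul_eq_mul, Complex.normSq_mul, Complex.normSq_ofReal,
      ← Finset.mul_sum]
    rw [← hN, hr, inv_mul_cancel₀ hN1]
  refine ⟨((((Real.sqrt N)⁻¹ : ℝ) : ℂ)) • v, hu, ?_⟩
  set u := (((Real.sqrt N)⁻¹ : ℝ) : ℂ) • v with hud
  have : M *ᵥ u = c • u := by rw [hud, mulVec_smul, he, smul_comm]
  rw [this, dotProduct_smul]
  have h1 := trace_pure u
  rw [hu, trace_vecMulVec, dotProduct_comm] at h1
  rw [h1]; simp

lemma converse_aux {m n : ℕ} (a₀ a₁ : Fin m → ℂ) (b₀ b₁ : Fin n → ℂ)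
    (h1 : star a₀ ⬝ᵥ a₀ = 1) (h2 : star a₁ ⬝ᵥ a₁ = 1) (h3 : star a₀ ⬝ᵥ a₁ = 0)
    (h4 : star b₀ ⬝ᵥ b₀ = 1) (h5 : star b₁ ⬝ᵥ b₁ = 1) (h6 : star b₀ ⬝ᵥ b₁ = 0) :
    ∃ v : Fin m × Fin n → ℂ, v ≠ 0 ∧
        ptranspose (Matrix.vecMulVec
          ((((Real.sqrt 2)⁻¹ : ℝ) : ℂ) • (prodVec a₀ b₀ + prodVec a₁ b₁))
          (star ((((Real.sqrt 2)⁻¹ : ℝ) : ℂ) • (prodVec a₀ b₀ + prodVec a₁ b₁)))) *ᵥ v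
          = ((-(1/2 : ℝ) : ℝ) : ℂ) • v := by
  have hr : (((Real.sqrt 2)⁻¹ : ℝ) : ℂ) * (((Real.sqrt 2)⁻¹ : ℝ) : ℂ) = 1/2 := by
    rw [← Complex.ofReal_mul, ← mul_inv, Real.mul_self_sqrt (by norm_num)]
    norm_num
  have h3' : star a₁ ⬝ᵥ a₀ = 0 := by
    have := congrArg star h3
    rwa [star_dotProduct, star_star, dotProduct_comm, star_zero, dotProduct_comm] at this
  have h6' : star b₁ ⬝ᵥ b₀ = 0 := by
    have := congrArg star h6
    rwa [star_dotProduct, star_star, dotProduct_comm, star_zero, dotProduct_comm] at this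
  simp only [dotProduct, Pi.star_apply] at h1 h2 h3 h4 h5 h6 h3' h6'
  refine ⟨fun p => a₀ p.1 * star (b₁ p.2) - a₁ p.1 * star (b₀ p.2), ?_, ?_⟩
  · intro h0
    have e : ∑ i, ∑ j, star (a₀ i) * b₁ j * (a₀ i * star (b₁ j) - a₁ i * star (b₀ j)) = 0 := by
      refine Finset.sum_eq_zero fun i _ => Finset.sum_eq_zero fun j _ => ?_
      have := congrFun h0 (i, j)
      simp only [Pi.zero_apply] at this
      rw [this, mul_zero]
    have e2 : ∑ i, ∑ j, star (a₀ i) * b₁ j * (a₀ i * star (b₁ j) - a₁ i * star (b₀ j)) =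
        (∑ i, star (a₀ i) * a₀ i) * (∑ j, star (b₁ j) * b₁ j) -
        (∑ i, star (a₀ i) * a₁ i) * (∑ j, star (b₀ j) * b₁ j) := by
      rw [Finset.sum_mul_sum, Finset.sum_mul_sum, ← Finset.sum_sub_distrib]
      refine Finset.sum_congr rfl fun i _ => ?_
      rw [← Finset.sum_sub_distrib]
      refine Finset.sum_congr rfl fun j _ => ?_
      ring
    rw [e2, h1, h3, h5] at e
    norm_num at e
  · ext ⟨i, j⟩
    simp only [mulVec, dotProduct, ptranspose, of_apply, vecMulVec_apply, Pi.star_apply,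
      Pi.smul_apply, Pi.add_apply, prodVec, smul_eq_mul, Fintype.sum_prod_type, star_mul',
      star_add]
    have hst : star ((((Real.sqrt 2)⁻¹ : ℝ) : ℂ)) = (((Real.sqrt 2)⁻¹ : ℝ) : ℂ) := by
      rw [Complex.star_def, Complex.conj_ofReal]
    rw [hst]
    generalize (((Real.sqrt 2)⁻¹ : ℝ) : ℂ) = r at *
    have e : ∑ x, ∑ y, r * (a₀ i * b₀ y + a₁ i * b₁ y) *
        (r * (star (a₀ x) * star (b₀ j) + star (a₁ x) * star (b₁ j))) *
        (a₀ x * star (b₁ y) - a₁ x * star (b₀ y)) =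
        r * r * ((star (b₀ j) * (∑ x, star (a₀ x) * a₀ x) + star (b₁ j) * (∑ x, star (a₁ x) * a₀ x)) *
          (a₀ i * (∑ y, star (b₁ y) * b₀ y) + a₁ i * (∑ y, star (b₁ y) * b₁ y)) -
          (star (b₀ j) * (∑ x, star (a₀ x) * a₁ x) + star (b₁ j) * (∑ x, star (a₁ x) * a₁ x)) *
          (a₀ i * (∑ y, star (b₀ y) * b₀ y) + a₁ i * (∑ y, star (b₀ y) * b₁ y))) := by
      have hl : ∀ {k : ℕ} (c d : ℂ) (f g : Fin k → ℂ), c * ∑ x, f x + d * ∑ x, g x =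
          ∑ x, (c * f x + d * g x) := by
        intro k c d f g
        rw [Finset.sum_add_distrib, Finset.mul_sum, Finset.mul_sum]
      rw [hl, hl, hl, hl, Finset.sum_mul_sum, Finset.sum_mul_sum, ← Finset.sum_sub_distrib, Finset.mul_sum]
      refine Finset.sum_congr rfl fun x _ => ?_
      rw [← Finset.sum_sub_distrib, Finset.mul_sum]
      refine Finset.sum_congr rfl fun y _ => ?_
      ring
    rw [e, h1, h2, h3, h4, h5, h6, h3', h6', hr]
    push_cast
    ring

/-- Every eigenvalue of the partial transpose of a normalized state is
`≥ -1/2`, and `-1/2` is attained iff the state is a two-qubit maximally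
entangled pure state. -/
theorem stmt17 {m n : ℕ} (ρ : Matrix (Fin m × Fin n) (Fin m × Fin n) ℂ)
    (hρ : ρ.PosSemidef) (htr : ρ.trace = 1) :
    (∀ μ : ℝ, (∃ v : Fin m × Fin n → ℂ, v ≠ 0 ∧ ptranspose ρ *ᵥ v = (μ : ℂ) • v) →
      -(1/2 : ℝ) ≤ μ) ∧
    ((∃ v : Fin m × Fin n → ℂ, v ≠ 0 ∧
        ptranspose ρ *ᵥ v = ((-(1/2 : ℝ) : ℝ) : ℂ) • v) ↔
      ∃ (a₀ a₁ : Fin m → ℂ) (b₀ b₁ : Fin n → ℂ),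
        star a₀ ⬝ᵥ a₀ = 1 ∧ star a₁ ⬝ᵥ a₁ = 1 ∧ star a₀ ⬝ᵥ a₁ = 0 ∧
        star b₀ ⬝ᵥ b₀ = 1 ∧ star b₁ ⬝ᵥ b₁ = 1 ∧ star b₀ ⬝ᵥ b₁ = 0 ∧
        ρ = Matrix.vecMulVec
          ((((Real.sqrt 2)⁻¹ : ℝ) : ℂ) • (prodVec a₀ b₀ + prodVec a₁ b₁))
          (star ((((Real.sqrt 2)⁻¹ : ℝ) : ℂ) • (prodVec a₀ b₀ + prodVec a₁ b₁)))) := by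
  obtain ⟨N, w, hw⟩ := Matrix.posSemidef_iff_eq_sum_vecMulVec.mp hρ
  have htr' : ∑ k, ∑ i, ∑ j, Complex.normSq (w k (i, j)) = 1 := by
    rw [hw, trace_sum] at htr
    simp only [trace_pure] at htr
    exact_mod_cast htr
  -- the excess over the bound as a sum over pure components
  have hsum : ∀ (v : Fin m × Fin n → ℂ) (μ : ℝ), star v ⬝ᵥ (ptranspose ρ *ᵥ v) = (μ : ℂ) →
      ∑ k, ((1/2) * ∑ i, ∑ j, Complex.normSq (w k (i, j)) +
        (QF (Matrix.of fun i j => v (i, j)) (Matrix.of fun i j => w k (i, j))).re) = 1/2 + μ := by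
    intro v μ h
    rw [hw, ptranspose_sum, sum_mulVec, dotProduct_sum] at h
    simp only [quad_pure] at h
    rw [Finset.sum_add_distrib, ← Finset.mul_sum, htr', ← Complex.re_sum, h, Complex.ofReal_re]
    ring
  refine ⟨?_, ?_, ?_⟩
  · intro μ h
    obtain ⟨v, hv1, hv2⟩ := exists_unit _ _ h
    have hk := (key (Matrix.of fun i j => v (i, j)) hv1).1
    have h1 := hsum v μ hv2
    have h2 := Finset.sum_nonneg fun k (_ : k ∈ Finset.univ) =>
      hk (Matrix.of fun i j => w k (i, j))
    simp only [of_apply] at h2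
    linarith
  · intro h
    obtain ⟨v, hv1, hv2⟩ := exists_unit _ _ h
    obtain ⟨hk, hk2⟩ := key (Matrix.of fun i j => v (i, j)) hv1
    have h1 := hsum v _ hv2
    rw [add_neg_cancel] at h1
    have h2 := fun k => (Finset.sum_eq_zero_iff_of_nonneg (fun k _ =>
      hk (Matrix.of fun i j => w k (i, j)))).mp h1 k (Finset.mem_univ k)
    rcases hk2 with hk2 | ⟨a₀, a₁, b₀, b₁, q1, q2, q3, q4, q5, q6, hk2⟩
    · exfalso
      have : ∀ k i j, w k (i, j) = 0 := by
        intro k i j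
        exact congrFun (congrFun (hk2 _ (h2 k)) i) j
      simp [this] at htr'
    · refine ⟨a₀, a₁, b₀, b₁, q1, q2, q3, q4, q5, q6, ?_⟩
      choose t ht using fun k => hk2 _ (h2 k)
      have hwk : ∀ k, w k = t k • (prodVec a₀ b₀ + prodVec a₁ b₁) := by
        intro k
        ext ⟨i, j⟩
        exact ht k i j
      set ψ := prodVec a₀ b₀ + prodVec a₁ b₁ with hψ
      have hρ2 : ρ = (∑ k, t k * star (t k)) • vecMulVec ψ (star ψ) := by
        rw [hw, Finset.sum_smul]
        refine Finset.sum_congr rfl fun k _ => ?_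
        rw [hwk k, star_smul, smul_vecMulVec, vecMulVec_smul, smul_smul]
      have hn : (vecMulVec ψ (star ψ)).trace = 2 := by
        have q3' : star a₁ ⬝ᵥ a₀ = 0 := by
          have := congrArg star q3
          rwa [star_dotProduct, star_star, dotProduct_comm, star_zero, dotProduct_comm] at this
        have hpp : ∀ (a a' : Fin m → ℂ) (b b' : Fin n → ℂ),
            star (prodVec a b) ⬝ᵥ prodVec a' b' = (star a ⬝ᵥ a') * (star b ⬝ᵥ b') := by
          intro a a' b b'
          simp only [dotProduct, prodVec, Pi.star_apply, Fintype.sum_prod_type, star_mul']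
          rw [Finset.sum_mul_sum]
          refine Finset.sum_congr rfl fun i _ => Finset.sum_congr rfl fun j _ => ?_
          ring
        rw [trace_vecMulVec, dotProduct_comm, hψ, star_add, add_dotProduct, dotProduct_add,
          dotProduct_add, hpp, hpp, hpp, hpp, q1, q2, q3, q3', q4, q5]
        norm_num
      have hc : (∑ k, t k * star (t k)) = 1/2 := by
        rw [hρ2, trace_smul, hn, smul_eq_mul] at htr
        rw [← htr]; ring
      have hr : (((Real.sqrt 2)⁻¹ : ℝ) : ℂ) * (((Real.sqrt 2)⁻¹ : ℝ) : ℂ) = 1/2 := by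
        rw [← Complex.ofReal_mul, ← mul_inv, Real.mul_self_sqrt (by norm_num)]
        norm_num
      rw [hρ2, hc, star_smul, smul_vecMulVec, vecMulVec_smul, smul_smul, Complex.star_def,
        Complex.conj_ofReal, hr]
  · rintro ⟨a₀, a₁, b₀, b₁, q1, q2, q3, q4, q5, q6, rfl⟩
    exact converse_aux a₀ a₁ b₀ b₁ q1 q2 q3 q4 q5 q6
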